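/- arXiv:1804.08174 — 3 statements merged into one kernel-verified Lean document; each statement's English description precedes it below -/
import Mathlib

section
/- Let M be an n×n row-stochastic matrix satisfying M_{ij} > 0 ⟺ M_{ji} > 0 for all i, j, let p(0) be a probability distribution with p_i(0) > 0 for all i, and set p(t) = p(0)M^t. Define H(t) = Σ_{i_0,…,i_t : p_{i_0}(0) M_{i_0 i_1}⋯M_{i_{t−1} i_t} > 0} p_{i_0}(0) M_{i_0 i_1}⋯M_{i_{t−1} i_t} · log( p_{i_0}(0) M_{i_0 i_1}⋯M_{i_{t−1} i_t} / ( p_{i_t}(0) M_{i_t i_{t−1}}⋯M_{i_1 i_0} ) ) for t ≥ 1 and H(0) = 0. Then for every t ≥ 0, H(t+1) − H(t) = Σ_{(i,j): M_{ij}>0} p_i(t) M_{ij} log( p_i(0) M_{ij} / ( p_j(0) M_{ji} ) ). -/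
open Finset

/-!
Appending a step `i → j` to a path multiplies the ratio of its weight to the weight of its reversal
by `μ i * M i j / (μ j * M j i)`: the reversed path now starts from `j` instead of `i`. Taking
logarithms and averaging, the old ratio contributes the old relative entropy because the rows of
`M` sum to one, and the new factor contributes an expectation over the endpoint of the path, whose
law is `μ ᵥ* M ^ t`.
-/

theorem sum_snoc {ι A : Type*} [Fintype ι] [AddCommMonoid A] {t : ℕ}
    (f : (Fin (t + 1) → ι) → A) :
    ∑ ω, f ω = ∑ ω : Fin t → ι, ∑ j, f (Fin.snoc ω j) := by
  rw [← (Fin.snocEquiv fun _ : Fin (t + 1) => ι).sum_comp, Fintype.sum_prod_type_right]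
  rfl

section PathWeight

open Matrix

theorem eq_vecMul_pow {ι R : Type*} [Fintype ι] [DecidableEq ι] [Semiring R] {M : Matrix ι ι R}
    {p : ℕ → ι → R} (hp : ∀ s, p (s + 1) = p s ᵥ* M) (t : ℕ) : p t = p 0 ᵥ* M ^ t := by
  induction t with
  | zero => rw [pow_zero, vecMul_one]
  | succ t ih => rw [hp, ih, vecMul_vecMul, pow_succ]

variable {ι R : Type*} {t : ℕ}

/-- The weight of the path `ω 0 → ⋯ → ω t` under the Markov chain with initial weights `μ` and
transition matrix `M`. A path with `t` steps is encoded by its `t + 1` vertices, so its time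
reversal is `ω ∘ Fin.rev`. -/
def pathWeight [CommSemiring R] (μ : ι → R) (M : Matrix ι ι R) (ω : Fin (t + 1) → ι) : R :=
  μ (ω 0) * ∏ s : Fin t, M (ω s.castSucc) (ω s.succ)

section CommSemiring

variable [CommSemiring R] (μ : ι → R) (M : Matrix ι ι R)

theorem pathWeight_comp_rev (ω : Fin (t + 1) → ι) :
    pathWeight μ M (ω ∘ Fin.rev) =
      μ (ω (Fin.last t)) * ∏ s : Fin t, M (ω s.succ) (ω s.castSucc) := by
  simp only [pathWeight, Function.comp_apply, Fin.rev_zero, Fin.rev_castSucc, Fin.rev_succ]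
  congr 1
  exact Equiv.prod_comp Fin.revPerm fun s : Fin t => M (ω s.succ) (ω s.castSucc)

theorem pathWeight_snoc (ω : Fin (t + 1) → ι) (j : ι) :
    pathWeight μ M (Fin.snoc ω j : Fin (t + 2) → ι) =
      pathWeight μ M ω * M (ω (Fin.last t)) j := by
  have start : (Fin.snoc ω j : Fin (t + 2) → ι) 0 = ω 0 := Fin.snoc_castSucc (i := 0) ..
  simp only [pathWeight, start, Fin.prod_univ_castSucc, Fin.snoc_castSucc, Fin.succ_castSucc,
    Fin.succ_last, Fin.snoc_last, mul_assoc]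

theorem mul_pathWeight_cons (ω : Fin (t + 1) → ι) (j : ι) :
    μ (ω 0) * pathWeight μ M (Fin.cons j ω : Fin (t + 2) → ι) =
      pathWeight μ M ω * (μ j * M j (ω 0)) := by
  simp only [pathWeight, Fin.prod_univ_succ (n := t), Fin.castSucc_zero, Fin.cons_zero,
    Fin.cons_succ, Fin.castSucc_succ]
  ring

theorem sum_pathWeight_mul_last [Fintype ι] [DecidableEq ι] (t : ℕ) (f : ι → R) :
    ∑ ω : Fin (t + 1) → ι, pathWeight μ M ω * f (ω (Fin.last t)) = (μ ᵥ* M ^ t) ⬝ᵥ f := by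
  induction t generalizing f with
  | zero =>
    rw [← (Equiv.funUnique (Fin 1) ι).symm.sum_comp]
    simp [pathWeight, dotProduct]
  | succ t ih =>
    calc ∑ ω : Fin (t + 2) → ι, pathWeight μ M ω * f (ω (Fin.last (t + 1)))
      _ = ∑ ω : Fin (t + 1) → ι, pathWeight μ M ω * (M *ᵥ f) (ω (Fin.last t)) := by
        simp only [sum_snoc (t := t + 1), pathWeight_snoc, Fin.snoc_last, mulVec, dotProduct,
          mul_sum, mul_assoc]
      _ = (μ ᵥ* M ^ t) ⬝ᵥ (M *ᵥ f) := ih _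
      _ = (μ ᵥ* M ^ (t + 1)) ⬝ᵥ f := by rw [dotProduct_mulVec, vecMul_vecMul, pow_succ]

end CommSemiring

section Order

variable [CommSemiring R] [PartialOrder R] [IsStrictOrderedRing R] {μ : ι → R} {M : Matrix ι ι R}

theorem pathWeight_nonneg (hμ : ∀ i, 0 ≤ μ i) (hM : ∀ i j, 0 ≤ M i j) (ω : Fin (t + 1) → ι) :
    0 ≤ pathWeight μ M ω :=
  mul_nonneg (hμ _) (prod_nonneg fun _ _ => hM _ _)

theorem pathWeight_comp_rev_pos (hμ : ∀ i, 0 < μ i) (hM : ∀ i j, 0 ≤ M i j)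
    (hsupp : ∀ i j, 0 < M i j → 0 < M j i) {ω : Fin (t + 1) → ι} (hω : pathWeight μ M ω ≠ 0) :
    0 < pathWeight μ M (ω ∘ Fin.rev) := by
  have step_ne_zero (s : Fin t) : M (ω s.castSucc) (ω s.succ) ≠ 0 := fun h =>
    right_ne_zero_of_mul hω (prod_eq_zero (mem_univ s) h)
  rw [pathWeight_comp_rev]
  exact mul_pos (hμ _) (prod_pos fun s _ => hsupp _ _ ((hM _ _).lt_of_ne' (step_ne_zero s)))

end Order

theorem pathWeight_snoc_div_rev [Field R] {μ : ι → R} (M : Matrix ι ι R) {ω : Fin (t + 1) → ι}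
    (hμ : μ (ω (Fin.last t)) ≠ 0) (j : ι) :
    pathWeight μ M (Fin.snoc ω j : Fin (t + 2) → ι) /
        pathWeight μ M ((Fin.snoc ω j : Fin (t + 2) → ι) ∘ Fin.rev) =
      pathWeight μ M ω / pathWeight μ M (ω ∘ Fin.rev) *
        (μ (ω (Fin.last t)) * M (ω (Fin.last t)) j / (μ j * M j (ω (Fin.last t)))) := by
  have rev_snoc := mul_pathWeight_cons μ M (ω ∘ Fin.rev) j
  rw [Function.comp_apply, Fin.rev_zero] at rev_snoc
  rw [pathWeight_snoc, Fin.snoc_comp_rev, div_mul_div_comm, ← rev_snoc, mul_left_comm,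
    mul_div_mul_left _ _ hμ]

theorem pathWeight_snoc_mul_log {μ : ι → ℝ} {M : Matrix ι ι ℝ} (hμ : ∀ i, 0 < μ i)
    (hM : ∀ i j, 0 ≤ M i j) (hsupp : ∀ i j, 0 < M i j → 0 < M j i)
    (ω : Fin (t + 1) → ι) (j : ι) :
    pathWeight μ M (Fin.snoc ω j : Fin (t + 2) → ι) *
        Real.log (pathWeight μ M (Fin.snoc ω j : Fin (t + 2) → ι) /
          pathWeight μ M ((Fin.snoc ω j : Fin (t + 2) → ι) ∘ Fin.rev)) =
      pathWeight μ M ω * Real.log (pathWeight μ M ω / pathWeight μ M (ω ∘ Fin.rev)) *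
          M (ω (Fin.last t)) j +
        pathWeight μ M ω * (M (ω (Fin.last t)) j *
          Real.log (μ (ω (Fin.last t)) * M (ω (Fin.last t)) j /
            (μ j * M j (ω (Fin.last t))))) := by
  rw [pathWeight_snoc_div_rev M (hμ _).ne', pathWeight_snoc]
  by_cases hω : pathWeight μ M ω = 0
  · simp only [hω, zero_mul, add_zero]
  rcases (hM (ω (Fin.last t)) j).eq_or_lt' with hstep | hstep
  · simp only [hstep, mul_zero, zero_mul, add_zero]
  have ratio_ne_zero := div_ne_zero hω (pathWeight_comp_rev_pos hμ hM hsupp hω).ne'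
  have step_ratio_pos := div_pos (mul_pos (hμ (ω (Fin.last t))) hstep)
    (mul_pos (hμ j) (hsupp _ _ hstep))
  rw [Real.log_mul ratio_ne_zero step_ratio_pos.ne']
  ring

end PathWeight

section PathRelEntropy

open Matrix

variable {ι : Type*} [Fintype ι] {μ : ι → ℝ} {M : Matrix ι ι ℝ}

/-- The relative entropy of the law of the `t`-step path of a Markov chain with respect to the law
of its time reversal. Paths of weight zero contribute `0 * Real.log _ = 0`, so the sum runs over all
paths; where only the reversed path has weight zero the term is the junk value `Real.log 0 = 0`
instead of `∞`. -/
noncomputable def pathRelEntropy (μ : ι → ℝ) (M : Matrix ι ι ℝ) (t : ℕ) : ℝ :=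
  ∑ ω : Fin (t + 1) → ι,
    pathWeight μ M ω * Real.log (pathWeight μ M ω / pathWeight μ M (ω ∘ Fin.rev))

theorem pathRelEntropy_zero (μ : ι → ℝ) (M : Matrix ι ι ℝ) : pathRelEntropy μ M 0 = 0 := by
  refine sum_eq_zero fun ω _ => ?_
  have rev_eq : ω ∘ Fin.rev = ω := funext fun s => congrArg ω (Subsingleton.elim (α := Fin 1) _ _)
  rw [rev_eq]
  by_cases hω : pathWeight μ M ω = 0 <;> simp [hω]

theorem eq_pathRelEntropy (hμ : ∀ i, 0 ≤ μ i) (hM : ∀ i j, 0 ≤ M i j)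
    {w wrev : (t : ℕ) → (Fin (t + 1) → ι) → ℝ}
    (hw : ∀ t ω, w t ω = μ (ω 0) * ∏ s : Fin t, M (ω s.castSucc) (ω s.succ))
    (hwrev : ∀ t ω, wrev t ω =
      μ (ω (Fin.last t)) * ∏ s : Fin t, M (ω s.succ) (ω s.castSucc))
    {H : ℕ → ℝ} (hH0 : H 0 = 0)
    (hH : ∀ t, 1 ≤ t → H t = ∑ ω : Fin (t + 1) → ι,
      if 0 < w t ω then w t ω * Real.log (w t ω / wrev t ω) else 0) :
    H = pathRelEntropy μ M := by
  ext t
  rcases t.eq_zero_or_pos with rfl | ht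
  · rw [hH0, pathRelEntropy_zero]
  rw [hH t ht]
  refine sum_congr rfl fun ω _ => ?_
  have w_eq : w t ω = pathWeight μ M ω := hw t ω
  rw [w_eq, hwrev, ← pathWeight_comp_rev]
  split_ifs with hω
  · rfl
  · rw [le_antisymm (not_lt.1 hω) (pathWeight_nonneg hμ hM ω), zero_mul]

theorem pathRelEntropy_succ [DecidableEq ι] (hM : ∀ i j, 0 ≤ M i j) (hrow : ∀ i, ∑ j, M i j = 1)
    (hsupp : ∀ i j, 0 < M i j → 0 < M j i) (hμ : ∀ i, 0 < μ i) (t : ℕ) :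
    pathRelEntropy μ M (t + 1) = pathRelEntropy μ M t +
      (μ ᵥ* M ^ t) ⬝ᵥ fun i => ∑ j, M i j * Real.log (μ i * M i j / (μ j * M j i)) := by
  rw [pathRelEntropy, sum_snoc, ← sum_pathWeight_mul_last]
  simp only [pathWeight_snoc_mul_log hμ hM hsupp, sum_add_distrib, ← mul_sum, hrow, mul_one]
  rfl

theorem path_relative_entropy_step_general [DecidableEq ι] (hM : ∀ i j, 0 ≤ M i j)
    (hrow : ∀ i, ∑ j, M i j = 1) (hsupp : ∀ i j, 0 < M i j → 0 < M j i) (hμ : ∀ i, 0 < μ i)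
    (t : ℕ) :
    pathRelEntropy μ M (t + 1) - pathRelEntropy μ M t = ∑ i, ∑ j,
      if 0 < M i j then
        (μ ᵥ* M ^ t) i * M i j * Real.log (μ i * M i j / (μ j * M j i)) else 0 := by
  rw [pathRelEntropy_succ hM hrow hsupp hμ, add_sub_cancel_left]
  simp only [dotProduct, mul_sum]
  refine sum_congr rfl fun i _ => sum_congr rfl fun j _ => ?_
  split_ifs with hstep
  · rw [mul_assoc]
  · rw [le_antisymm (not_lt.1 hstep) (hM i j), zero_mul, mul_zero]

end PathRelEntropy

/-- One-step increment of the relative entropy of the path measure with respect to its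
time reversal: H(t+1) − H(t) = Σ_{(i,j): M_{ij}>0} p_i(t) M_{ij} log(p_i(0) M_{ij} / (p_j(0) M_{ji})). -/
theorem path_relative_entropy_step (n : ℕ) (M : Matrix (Fin n) (Fin n) ℝ)
    (hM0 : ∀ i j, 0 ≤ M i j) (hM1 : ∀ i, ∑ j, M i j = 1)
    (hsym : ∀ i j, 0 < M i j ↔ 0 < M j i)
    (p : ℕ → Fin n → ℝ)
    (hp0pos : ∀ i, 0 < p 0 i) (hp01 : ∑ i, p 0 i = 1)
    (hpstep : ∀ s i, p (s + 1) i = ∑ k, p s k * M k i)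
    (w wrev : (t : ℕ) → (Fin (t + 1) → Fin n) → ℝ)
    (hw : ∀ t ω, w t ω = p 0 (ω 0) * ∏ s : Fin t, M (ω s.castSucc) (ω s.succ))
    (hwrev : ∀ t ω, wrev t ω =
      p 0 (ω (Fin.last t)) * ∏ s : Fin t, M (ω s.succ) (ω s.castSucc))
    (H : ℕ → ℝ) (hH0 : H 0 = 0)
    (hH : ∀ t, 1 ≤ t → H t = ∑ ω : Fin (t + 1) → Fin n,
      if 0 < w t ω then w t ω * Real.log (w t ω / wrev t ω) else 0) :
    ∀ t : ℕ, H (t + 1) - H t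
      = ∑ i, ∑ j, if 0 < M i j
          then p t i * M i j * Real.log (p 0 i * M i j / (p 0 j * M j i)) else 0 := by
  obtain rfl := eq_pathRelEntropy (fun i => (hp0pos i).le) hM0 hw hwrev hH0 hH
  simpa only [← eq_vecMul_pow fun s => funext (hpstep s)] using
    path_relative_entropy_step_general hM0 hM1 (fun i j => (hsym i j).1) hp0pos
end

section
/- Let M be an irreducible n×n row-stochastic matrix satisfying M_{ij} > 0 ⟺ M_{ji} > 0 for all i, j, with (unique) stationary probability distribution π (which then satisfies π_i > 0 for all i). Then the stationary entropy production rate e_p = Σ_{(i,j): M_{ij}>0} π_i M_{ij} log( M_{ij} / M_{ji} ) is non-negative, and e_p = 0 if and only if M is in detailed balance, i.e., π_i M_{ij} = π_j M_{ji} for all i, j. -/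
open Finset

/-!
Let `F i j = π i * M i j` be the stationary probability flow along `i → j`. Since the flow into each
state equals the flow out of it, replacing `M i j / M j i` by `F i j / F j i` in the entropy
production only adds `∑ F i j (log π i - log π j) = 0`. Hence the entropy production is the relative
entropy of `F` with respect to its transpose, and Gibbs' inequality applies.
-/

section Gibbs

theorem mul_log_div_eq_mul_klFun_add_sub {a b : ℝ} (hab : b = 0 → a = 0) :
    a * Real.log (a / b) = b * InformationTheory.klFun (a / b) + (a - b) := by
  rcases eq_or_ne b 0 with rfl | hb
  · simp [hab rfl]
  · rw [InformationTheory.klFun_apply]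
    field_simp
    ring

theorem mul_klFun_div_nonneg {a b : ℝ} (ha : 0 ≤ a) (hb : 0 ≤ b) :
    0 ≤ b * InformationTheory.klFun (a / b) :=
  mul_nonneg hb (InformationTheory.klFun_nonneg (div_nonneg ha hb))

variable {ι : Type*} {s : Finset ι} {a b : ι → ℝ}

theorem sum_mul_log_div_eq_sum_mul_klFun_add_sub (hab : ∀ i ∈ s, b i = 0 → a i = 0) :
    ∑ i ∈ s, a i * Real.log (a i / b i) =
      ∑ i ∈ s, b i * InformationTheory.klFun (a i / b i) + (∑ i ∈ s, a i - ∑ i ∈ s, b i) := by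
  rw [← sum_sub_distrib, ← sum_add_distrib]
  exact sum_congr rfl fun i hi => mul_log_div_eq_mul_klFun_add_sub (hab i hi)

theorem sum_mul_log_div_nonneg (ha : ∀ i ∈ s, 0 ≤ a i) (hb : ∀ i ∈ s, 0 ≤ b i)
    (hab : ∀ i ∈ s, b i = 0 → a i = 0) (hsum : ∑ i ∈ s, b i ≤ ∑ i ∈ s, a i) :
    0 ≤ ∑ i ∈ s, a i * Real.log (a i / b i) := by
  rw [sum_mul_log_div_eq_sum_mul_klFun_add_sub hab]
  exact add_nonneg (sum_nonneg fun i hi => mul_klFun_div_nonneg (ha i hi) (hb i hi))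
    (sub_nonneg.mpr hsum)

theorem sum_mul_log_div_eq_zero_iff (ha : ∀ i ∈ s, 0 ≤ a i) (hb : ∀ i ∈ s, 0 ≤ b i)
    (hab : ∀ i ∈ s, b i = 0 → a i = 0) (hsum : ∑ i ∈ s, b i ≤ ∑ i ∈ s, a i) :
    ∑ i ∈ s, a i * Real.log (a i / b i) = 0 ↔ ∀ i ∈ s, a i = b i := by
  have hkl : ∀ i ∈ s, 0 ≤ b i * InformationTheory.klFun (a i / b i) :=
    fun i hi => mul_klFun_div_nonneg (ha i hi) (hb i hi)
  constructor
  · intro hzero i hi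
    rw [sum_mul_log_div_eq_sum_mul_klFun_add_sub hab] at hzero
    have hkl_sum : ∑ i ∈ s, b i * InformationTheory.klFun (a i / b i) = 0 := by
      linarith [sum_nonneg hkl]
    rcases mul_eq_zero.mp ((sum_eq_zero_iff_of_nonneg hkl).mp hkl_sum i hi) with hbi | hratio
    · rw [hab i hi hbi, hbi]
    · rw [InformationTheory.klFun_eq_zero_iff (div_nonneg (ha i hi) (hb i hi))] at hratio
      exact eq_of_div_eq_one hratio
  · intro heq
    refine sum_eq_zero fun i hi => ?_
    rw [heq i hi, Real.log_div_self, mul_zero]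

end Gibbs

section EntropyProduction

variable {ι : Type*}

theorem sum_mul_sub_eq_zero_of_balanced [Fintype ι] {R : Type*} [NonUnitalNonAssocRing R]
    {F : ι → ι → R} (hF : ∀ i, ∑ j, F i j = ∑ j, F j i) (f : ι → R) :
    ∑ i, ∑ j, F i j * (f i - f j) = 0 := by
  simp only [mul_sub, sum_sub_distrib]
  rw [sub_eq_zero, sum_comm (f := fun i j => F i j * f j)]
  simp only [← sum_mul, hF]

/-- The flow carried by the edge `e.1 → e.2` when state `i` has mass `π i` and jumps to `j` with
weight `M i j`. It is indexed by pairs so that the reversed flow is its composition with `Prod.swap`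
and Gibbs' inequality applies to a single sum. -/
def edgeFlow (π : ι → ℝ) (M : Matrix ι ι ℝ) (e : ι × ι) : ℝ :=
  π e.1 * M e.1 e.2

/-- The entropy production rate of the weights `π` under the transition weights `M`,
a sum over the edges with `0 < M i j`. -/
noncomputable def entropyProduction [Fintype ι] (π : ι → ℝ) (M : Matrix ι ι ℝ) : ℝ :=
  ∑ i, ∑ j, if 0 < M i j then π i * M i j * Real.log (M i j / M j i) else 0

variable {π : ι → ℝ} {M : Matrix ι ι ℝ}

theorem edgeFlow_nonneg (hπ : ∀ i, 0 ≤ π i) (hM : ∀ i j, 0 ≤ M i j) (e : ι × ι) :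
    0 ≤ edgeFlow π M e :=
  mul_nonneg (hπ e.1) (hM e.1 e.2)

theorem edgeFlow_eq_zero_of_swap_eq_zero [Fintype ι] (hM : ∀ i j, 0 ≤ M i j)
    (hsym : ∀ i j, 0 < M i j ↔ 0 < M j i) (hπ : ∀ i, 0 ≤ π i)
    (hbal : ∀ i, ∑ j, π i * M i j = ∑ j, π j * M j i) {e : ι × ι}
    (he : edgeFlow π M e.swap = 0) : edgeFlow π M e = 0 := by
  obtain ⟨i, j⟩ := e
  rcases mul_eq_zero.mp he with hπj | hMji
  · have inflow_zero : ∑ k, π k * M k j = 0 := by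
      rw [← hbal j]
      exact sum_eq_zero fun k _ => mul_eq_zero_of_left hπj _
    exact (sum_eq_zero_iff_of_nonneg fun k _ => mul_nonneg (hπ k) (hM k j)).mp inflow_zero i
      (mem_univ i)
  · have hMij : ¬ 0 < M i j := fun h => ((hsym i j).mp h).ne' hMji
    exact mul_eq_zero_of_right _ (le_antisymm (not_lt.mp hMij) (hM i j))

theorem edgeFlow_mul_log_div_swap {e : ι × ι}
    (he : edgeFlow π M e.swap = 0 → edgeFlow π M e = 0) :
    edgeFlow π M e * Real.log (edgeFlow π M e / edgeFlow π M e.swap) =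
      edgeFlow π M e * Real.log (M e.1 e.2 / M e.2 e.1) +
        edgeFlow π M e * (Real.log (π e.1) - Real.log (π e.2)) := by
  obtain ⟨i, j⟩ := e
  by_cases hflow : edgeFlow π M (i, j) = 0
  · simp only [hflow, zero_mul, add_zero]
  · obtain ⟨hπi : π i ≠ 0, hMij : M i j ≠ 0⟩ := mul_ne_zero_iff.mp hflow
    obtain ⟨hπj : π j ≠ 0, hMji : M j i ≠ 0⟩ := mul_ne_zero_iff.mp (mt he hflow)
    have hlog : Real.log (π i * M i j / (π j * M j i)) =
        Real.log (M i j / M j i) + (Real.log (π i) - Real.log (π j)) := by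
      rw [mul_div_mul_comm, Real.log_mul (div_ne_zero hπi hπj) (div_ne_zero hMij hMji),
        Real.log_div hπi hπj, add_comm]
    rw [← mul_add, ← hlog]
    rfl

theorem entropyProduction_eq_sum_edgeFlow_mul_log [Fintype ι] (hM : ∀ i j, 0 ≤ M i j) :
    entropyProduction π M =
      ∑ e : ι × ι, edgeFlow π M e * Real.log (M e.1 e.2 / M e.2 e.1) := by
  rw [Fintype.sum_prod_type]
  refine sum_congr rfl fun i _ => sum_congr rfl fun j _ => ?_
  rcases (hM i j).eq_or_lt with hMij | hMij
  · simp [edgeFlow, ← hMij]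
  · exact if_pos hMij

theorem entropyProduction_eq_sum_edgeFlow_mul_log_div_swap [Fintype ι] (hM : ∀ i j, 0 ≤ M i j)
    (hbal : ∀ i, ∑ j, π i * M i j = ∑ j, π j * M j i)
    (habs : ∀ e, edgeFlow π M e.swap = 0 → edgeFlow π M e = 0) :
    entropyProduction π M =
      ∑ e : ι × ι, edgeFlow π M e * Real.log (edgeFlow π M e / edgeFlow π M e.swap) := by
  have hlog : ∑ e : ι × ι, edgeFlow π M e * (Real.log (π e.1) - Real.log (π e.2)) = 0 := by
    rw [Fintype.sum_prod_type]
    exact sum_mul_sub_eq_zero_of_balanced hbal fun i => Real.log (π i)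
  rw [sum_congr rfl fun e _ => edgeFlow_mul_log_div_swap (habs e), sum_add_distrib, hlog, add_zero,
    entropyProduction_eq_sum_edgeFlow_mul_log hM]

/-- The diagonal entries cancel in the balance condition `hbal`, which thus makes sense for
transition matrices and for the jump rates of continuous-time chains alike. -/
theorem entropy_production_nonneg_and_zero_iff_db_general [Fintype ι]
    (hM : ∀ i j, 0 ≤ M i j) (hsym : ∀ i j, 0 < M i j ↔ 0 < M j i) (hπ : ∀ i, 0 ≤ π i)
    (hbal : ∀ i, ∑ j, π i * M i j = ∑ j, π j * M j i) :
    0 ≤ entropyProduction π M ∧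
      (entropyProduction π M = 0 ↔ ∀ i j, π i * M i j = π j * M j i) := by
  have hflow : ∀ e, 0 ≤ edgeFlow π M e := edgeFlow_nonneg hπ hM
  have habs : ∀ e, edgeFlow π M e.swap = 0 → edgeFlow π M e = 0 :=
    fun _ => edgeFlow_eq_zero_of_swap_eq_zero hM hsym hπ hbal
  have hmass : ∑ e : ι × ι, edgeFlow π M e.swap ≤ ∑ e, edgeFlow π M e :=
    ((Equiv.prodComm ι ι).sum_comp (edgeFlow π M)).le
  rw [entropyProduction_eq_sum_edgeFlow_mul_log_div_swap hM hbal habs]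
  refine ⟨sum_mul_log_div_nonneg (fun e _ => hflow e) (fun e _ => hflow e.swap)
    (fun e _ => habs e) hmass, ?_⟩
  rw [sum_mul_log_div_eq_zero_iff (fun e _ => hflow e) (fun e _ => hflow e.swap)
    (fun e _ => habs e) hmass]
  exact ⟨fun h i j => h (i, j) (mem_univ _), fun h e _ => h e.1 e.2⟩

end EntropyProduction

/-- The stationary entropy production rate is non-negative, and it vanishes if and only
if the chain is in detailed balance. -/
theorem entropy_production_nonneg_and_zero_iff_db (n : ℕ)
    (M : Matrix (Fin n) (Fin n) ℝ)
    (hM0 : ∀ i j, 0 ≤ M i j) (hM1 : ∀ i, ∑ j, M i j = 1)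
    (hsym : ∀ i j, 0 < M i j ↔ 0 < M j i)
    (hirr : ∀ i j, ∃ k, 1 ≤ k ∧ 0 < (M ^ k) i j)
    (π : Fin n → ℝ) (hπ0 : ∀ i, 0 ≤ π i) (hπ1 : ∑ i, π i = 1)
    (hπstat : ∀ j, ∑ i, π i * M i j = π j) :
    0 ≤ (∑ i, ∑ j, if 0 < M i j then π i * M i j * Real.log (M i j / M j i) else 0)
    ∧ ((∑ i, ∑ j, if 0 < M i j then π i * M i j * Real.log (M i j / M j i) else 0) = 0
        ↔ ∀ i j, π i * M i j = π j * M j i) :=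
  entropy_production_nonneg_and_zero_iff_db_general hM0 hsym hπ0 fun i => by
    rw [← mul_sum, hM1, mul_one, hπstat]
end

section
/- Let M be an n×n row-stochastic matrix and let Q be the maximum entropy RDS measure on maps α : {1,…,n} → {1,…,n}, Q(α) = Π_i M_{i, α(i)}. A cycle c is a pair (S, σ) where S ⊆ {1,…,n} is nonempty and σ is a cyclic permutation of S; write A(α) = c if Per(α) = S and α agrees with σ on S. Then Q(α : A(α) = c) = ( Π_{x ∈ S} M_{x, σ(x)} ) · e(𝓕_S), where e(𝓕_S) is the total weight of directed forests rooted at S; consequently, if M is irreducible, the cycle weight w_c := ( Π_{x ∈ S} M_{x, σ(x)} ) · e(𝓕_S) / Σ_{k} e(𝒯_k) satisfies w_c = Q(α : A(α) = c) / E_Q[‖A(α)‖]. -/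
open Finset
open scoped Classical

/-!
Whether every orbit of a map `α` enters `S` depends only on the values of `α` off `S`. If `α`
agrees on `S` with a permutation `σ` of `S`, the periodic points of `α` are exactly `S` iff every
orbit enters `S`. Replacing `σ` by the identity on `S` therefore turns these maps into the forests
rooted at `S`, and only the factor `∏ x ∈ S, M x (σ x)` is lost.

The same surgery on `S = {k}`, summed over the value of `α k` with weights adding up to `1`, shows
that the trees rooted at `k` weigh as much as the maps all of whose orbits pass through `k`. The
number of such `k` is the size of the attractor of `α` if it is unique, and `0` otherwise, so
summing over `k` gives the expected attractor size.
-/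

section Dynamics

open Function Set

variable {V : Type*} {α β : V → V} {S : Set V} {x i : V}

/-- Every state reaches `S` under iteration of `α`. For `S` fixed pointwise by `α` this says that
`α` is a forest rooted at `S`. -/
def EveryOrbitMeets (α : V → V) (S : Set V) : Prop :=
  ∀ j, ∃ k, α^[k] j ∈ S

/-- All periodic points of `α` lie on one cycle. -/
def HasSingleAttractor (α : V → V) : Prop :=
  ∀ x ∈ periodicPts α, ∀ y ∈ periodicPts α, ∃ k, α^[k] x = y

/-- The size `‖A(α)‖` of the attractor of `α`, with value `0` unless the attractor is unique. -/
noncomputable def attractorNorm (α : V → V) : ℕ :=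
  if HasSingleAttractor α then (periodicPts α).ncard else 0

/-- `α` acts on its set of periodic points, which is `S`, as `σ` does. If `σ` is a cyclic
permutation of `S`, this is the event `A(α) = (S, σ)`. -/
def HasRecurrentPart (α : V → V) (S : Set V) (σ : V → V) : Prop :=
  periodicPts α = S ∧ EqOn α σ S

theorem EveryOrbitMeets.congr (hα : EveryOrbitMeets α S) (h : EqOn α β Sᶜ) :
    EveryOrbitMeets β S := by
  intro j
  obtain ⟨k, hk⟩ := hα j
  induction k generalizing j with
  | zero => exact ⟨0, hk⟩
  | succ k ih =>
    by_cases hj : j ∈ S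
    · exact ⟨0, hj⟩
    · rw [iterate_succ_apply, h hj] at hk
      obtain ⟨l, hl⟩ := ih (β j) hk
      exact ⟨l + 1, hl⟩

theorem EveryOrbitMeets.piecewise {S : Finset V} [∀ j, Decidable (j ∈ S)]
    (hα : EveryOrbitMeets α S) (f : V → V) : EveryOrbitMeets (S.piecewise f α) S :=
  hα.congr fun _ hx => (S.piecewise_eq_of_notMem f α hx).symm

theorem piecewise_piecewise_of_eqOn {W : Type*} {S : Finset V} [∀ j, Decidable (j ∈ S)]
    {f g : V → W} (hfg : EqOn f g S) (h : V → W) : S.piecewise g (S.piecewise h f) = f := by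
  rw [piecewise_idem_right, S.piecewise_congr (fun x hx => (hfg hx).symm) fun _ _ => rfl,
    Finset.piecewise_same]

theorem everyOrbitMeets_periodicPts [Finite V] (α : V → V) :
    EveryOrbitMeets α (periodicPts α) := by
  intro j
  obtain ⟨a, b, hab, h⟩ := Set.finite_univ.exists_lt_map_eq_of_forall_mem
    (f := fun m : ℕ => α^[m] j) fun _ => Set.mem_univ _
  refine ⟨a, mk_mem_periodicPts (Nat.sub_pos_of_lt hab) ?_⟩
  rw [IsPeriodicPt, IsFixedPt, ← iterate_add_apply, Nat.sub_add_cancel hab.le]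
  exact h.symm

theorem exists_iterate_iterate_eq_of_mem_periodicPts (hx : x ∈ periodicPts α) (m : ℕ) :
    ∃ k, α^[k] (α^[m] x) = x := by
  obtain ⟨n, hn, hnx⟩ := hx
  refine ⟨n * m - m, ?_⟩
  rw [← iterate_add_apply, Nat.sub_add_cancel (Nat.le_mul_of_pos_left m hn)]
  exact hnx.mul_const m

theorem EveryOrbitMeets.periodicPts_subset (h : EveryOrbitMeets α S) (hS : MapsTo α S S) :
    periodicPts α ⊆ S := by
  intro x hx
  obtain ⟨m, hm⟩ := h x
  obtain ⟨k, hk⟩ := exists_iterate_iterate_eq_of_mem_periodicPts hx m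
  exact hk ▸ hS.iterate k hm

theorem EveryOrbitMeets.mem_periodicPts (h : EveryOrbitMeets α {i}) : i ∈ periodicPts α := by
  obtain ⟨k, hk⟩ := h (α i)
  exact mk_mem_periodicPts k.succ_pos hk

theorem EveryOrbitMeets.hasSingleAttractor (h : EveryOrbitMeets α {i}) :
    HasSingleAttractor α := by
  intro x _ y hy
  obtain ⟨a, ha : α^[a] x = i⟩ := h x
  obtain ⟨b, hb : α^[b] y = i⟩ := h y
  obtain ⟨c, hc⟩ := exists_iterate_iterate_eq_of_mem_periodicPts hy b
  exact ⟨c + a, by rw [iterate_add_apply, ha, ← hb, hc]⟩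

theorem HasSingleAttractor.everyOrbitMeets_singleton [Finite V] (h : HasSingleAttractor α)
    (hi : i ∈ periodicPts α) : EveryOrbitMeets α {i} := by
  intro j
  obtain ⟨m, hm⟩ := everyOrbitMeets_periodicPts α j
  obtain ⟨k, hk⟩ := h _ hm i hi
  exact ⟨k + m, by rw [iterate_add_apply]; exact hk⟩

theorem attractorNorm_eq_card [Fintype V] (α : V → V) :
    attractorNorm α = #{i | EveryOrbitMeets α {i}} := by
  unfold attractorNorm
  split_ifs with h
  · rw [← Set.ncard_coe_finset]
    congr 1
    ext i
    simpa using ⟨h.everyOrbitMeets_singleton, EveryOrbitMeets.mem_periodicPts⟩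
  · exact (card_eq_zero.2 <| filter_eq_empty_iff.2 fun i _ hi => h hi.hasSingleAttractor).symm

theorem subset_periodicPts_of_bijOn (hS : S.Finite) (hα : BijOn α S S) :
    S ⊆ periodicPts α := by
  intro x hx
  have := hS.to_subtype
  have hres : ⟨x, hx⟩ ∈ periodicPts (hα.mapsTo.restrict α S S) :=
    (hα.mapsTo.restrict_inj.2 hα.injOn).mem_periodicPts _
  exact Semiconj.mapsTo_periodicPts (g := Subtype.val) (fun _ => rfl) hres

theorem hasRecurrentPart_iff [Finite V] {σ : V → V} (hσ : BijOn σ S S) :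
    HasRecurrentPart α S σ ↔ EqOn α σ S ∧ EveryOrbitMeets α S := by
  constructor
  · rintro ⟨hper, hα⟩
    exact ⟨hα, hper ▸ everyOrbitMeets_periodicPts α⟩
  · rintro ⟨hα, hmeets⟩
    have hbij : BijOn α S S := hσ.congr hα.symm
    exact ⟨(hmeets.periodicPts_subset hbij.mapsTo).antisymm
      (subset_periodicPts_of_bijOn S.toFinite hbij), hα⟩

theorem bijOn_of_forall_notMem_apply_eq (σ : Equiv.Perm V) (hfix : ∀ x ∉ S, σ x = x) :
    BijOn σ S S := by
  have hcompl : BijOn σ Sᶜ Sᶜ := (bijOn_id Sᶜ).congr fun x hx => (hfix x hx).symm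
  simpa only [compl_compl] using hcompl.compl σ.bijective

end Dynamics

section Weights

open Set (BijOn EqOn)

variable {V R : Type*} [Fintype V] [CommSemiring R]

/-- The maximum entropy RDS measure `Q` of `M`: the values of `α` are chosen independently, that of
`α i` with weight `M i (α i)`. -/
def maxEntropyRDS (M : Matrix V V R) (α : V → V) : R :=
  ∏ i, M i (α i)

/-- The total weight `e(𝓕_S)` of the forests rooted at `S`; the trees rooted at `k` are the forests
rooted at `{k}`. -/
noncomputable def forestWeight [DecidableEq V] (M : Matrix V V R) (S : Finset V) : R :=
  ∑ τ with EqOn τ id (S : Set V) ∧ EveryOrbitMeets τ S, ∏ j ∈ Sᶜ, M j (τ j)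

theorem sum_eqOn_everyOrbitMeets [DecidableEq V] (M : Matrix V V R) (S : Finset V) (σ : V → V) :
    ∑ α with EqOn α σ (S : Set V) ∧ EveryOrbitMeets α S, maxEntropyRDS M α =
      (∏ x ∈ S, M x (σ x)) * forestWeight M S := by
  rw [forestWeight, mul_sum]
  refine sum_nbij' (fun α => S.piecewise id α) (fun τ => S.piecewise σ τ) ?_ ?_ ?_ ?_ ?_ <;>
    simp only [mem_filter_univ]
  · exact fun α hα => ⟨fun x hx => S.piecewise_eq_of_mem id α hx, hα.2.piecewise id⟩
  · exact fun τ hτ => ⟨fun x hx => S.piecewise_eq_of_mem σ τ hx, hτ.2.piecewise σ⟩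
  · exact fun α hα => piecewise_piecewise_of_eqOn hα.1 id
  · exact fun τ hτ => piecewise_piecewise_of_eqOn hτ.1 σ
  · intro α hα
    rw [maxEntropyRDS, ← prod_mul_prod_compl S]
    congr 1
    · exact prod_congr rfl fun x hx => by rw [hα.1 hx]
    · exact prod_congr rfl fun x hx => by rw [S.piecewise_eq_of_notMem _ _ (mem_compl.1 hx)]

theorem sum_everyOrbitMeets_singleton [DecidableEq V] (M : Matrix V V R) (k : V) :
    ∑ α with EveryOrbitMeets α {k}, maxEntropyRDS M α =
      (∑ y, M k y) * forestWeight M {k} := by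
  rw [← sum_fiberwise _ (fun α : V → V => α k), sum_mul]
  refine sum_congr rfl fun y _ => ?_
  simpa [filter_filter, and_comm] using sum_eqOn_everyOrbitMeets M {k} fun _ => y

theorem sum_hasRecurrentPart [DecidableEq V] (M : Matrix V V R) {S : Finset V} {σ : V → V}
    (hσ : BijOn σ (S : Set V) S) :
    ∑ α with HasRecurrentPart α S σ, maxEntropyRDS M α =
      (∏ x ∈ S, M x (σ x)) * forestWeight M S := by
  simp only [hasRecurrentPart_iff hσ, sum_eqOn_everyOrbitMeets]

theorem sum_forestWeight_singleton [DecidableEq V] {M : Matrix V V R} (hM : ∀ i, ∑ j, M i j = 1) :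
    ∑ k, forestWeight M {k} = ∑ α, maxEntropyRDS M α * attractorNorm α :=
  calc
    ∑ k, forestWeight M {k} = ∑ k, ∑ α with EveryOrbitMeets α {k}, maxEntropyRDS M α := by
      simp only [sum_everyOrbitMeets_singleton, hM, one_mul]
    _ = ∑ α, ∑ k with EveryOrbitMeets α {k}, maxEntropyRDS M α :=
      sum_comm' fun k α => by simp
    _ = ∑ α, maxEntropyRDS M α * attractorNorm α := by
      simp only [sum_const, nsmul_eq_mul', attractorNorm_eq_card]

theorem cycle_weight_via_maximum_entropy_RDS_general [DecidableEq V] {M : Matrix V V R}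
    (hM : ∀ i, ∑ j, M i j = 1) {S : Finset V} {σ : V → V} (hσ : BijOn σ (S : Set V) S) :
    ∑ α with HasRecurrentPart α S σ, maxEntropyRDS M α =
        (∏ x ∈ S, M x (σ x)) * forestWeight M S ∧
      ∑ k, forestWeight M {k} = ∑ α, maxEntropyRDS M α * attractorNorm α :=
  ⟨sum_hasRecurrentPart M hσ, sum_forestWeight_singleton hM⟩

end Weights

/-- For the maximum entropy RDS measure Q(α) = Π_i M_{i,α(i)} and a cycle c = (S,σ),
Q(α : A(α) = c) = (Π_{x∈S} M_{x,σ(x)}) · e(𝓕_S); consequently, if M is irreducible, the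
cycle weight w_c = (Π_{x∈S} M_{x,σ(x)}) e(𝓕_S) / Σ_k e(𝒯_k) equals
Q(α : A(α) = c) / E_Q[‖A(α)‖]. -/
theorem cycle_weight_via_maximum_entropy_RDS (n : ℕ)
    (M : Matrix (Fin n) (Fin n) ℝ)
    (hM0 : ∀ i j, 0 ≤ M i j) (hM1 : ∀ i, ∑ j, M i j = 1)
    (Q : (Fin n → Fin n) → ℝ) (hQ : ∀ α, Q α = ∏ i, M i (α i))
    (Per : (Fin n → Fin n) → Finset (Fin n))
    (hPer : ∀ α, Per α = Finset.univ.filter fun x => ∃ k, 1 ≤ k ∧ α^[k] x = x)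
    (single : (Fin n → Fin n) → Prop)
    (hsingle : ∀ α, single α ↔ ∀ x ∈ Per α, ∀ y ∈ Per α, ∃ k, α^[k] x = y)
    (normA : (Fin n → Fin n) → ℝ)
    (hnormA : ∀ α, normA α = if single α then ((Per α).card : ℝ) else 0)
    (eT : Fin n → ℝ)
    (heT : ∀ i, eT i = ∑ τ : Fin n → Fin n,
      if (τ i = i ∧ ∀ j, ∃ k, τ^[k] j = i)
        then ∏ j ∈ Finset.univ.erase i, M j (τ j) else 0)
    (eF : Finset (Fin n) → ℝ)
    (heF : ∀ S, eF S = ∑ τ : Fin n → Fin n,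
      if ((∀ s ∈ S, τ s = s) ∧ ∀ j, ∃ k, τ^[k] j ∈ S)
        then ∏ j ∈ Sᶜ, M j (τ j) else 0)
    -- the cycle c = (S, σ): S nonempty, σ a permutation fixing Sᶜ and cyclic on S
    (S : Finset (Fin n)) (σ : Equiv.Perm (Fin n))
    (hSne : S.Nonempty) (hfix : ∀ x ∉ S, σ x = x)
    (htrans : ∀ x ∈ S, ∀ y ∈ S, ∃ k, (⇑σ)^[k] x = y)
    (QA : ℝ)
    (hQA : QA = ∑ α : Fin n → Fin n,
      if (Per α = S ∧ ∀ x ∈ S, α x = σ x) then Q α else 0) :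
    QA = (∏ x ∈ S, M x (σ x)) * eF S ∧
    ((∀ i j, ∃ k, 1 ≤ k ∧ 0 < (M ^ k) i j) →
      (∏ x ∈ S, M x (σ x)) * eF S / (∑ k, eT k)
        = QA / ∑ α : Fin n → Fin n, Q α * normA α) := by
  obtain ⟨hcycle, hsum⟩ := cycle_weight_via_maximum_entropy_RDS_general hM1
    (bijOn_of_forall_notMem_apply_eq (S := (S : Set (Fin n))) σ hfix)
  have coe_Per : ∀ α, (Per α : Set (Fin n)) = Function.periodicPts α := fun α => by
    rw [hPer, coe_filter_univ]; rfl
  have normA_eq : ∀ α, normA α = attractorNorm α := fun α => by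
    simp [hnormA, hsingle, attractorNorm, HasSingleAttractor, ← coe_Per]
  have eT_eq : ∀ k, eT k = forestWeight M {k} := fun k => by
    simp [heT, forestWeight, sum_filter, EveryOrbitMeets, compl_singleton]
  have eF_eq : eF S = forestWeight M S := by
    simp [heF, forestWeight, sum_filter, EveryOrbitMeets, Set.EqOn]
  have QA_eq : QA = ∑ α with HasRecurrentPart α S σ, maxEntropyRDS M α := by
    simp [hQA, hQ, sum_filter, HasRecurrentPart, maxEntropyRDS, ← coe_Per, Set.EqOn]
  have expectation_eq : ∑ k, eT k = ∑ α, Q α * normA α := by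
    simp only [eT_eq, hsum, hQ, normA_eq, maxEntropyRDS]
  have QA_eq_mul : QA = (∏ x ∈ S, M x (σ x)) * eF S := by rw [QA_eq, hcycle, eF_eq]
  exact ⟨QA_eq_mul, fun _ => by rw [QA_eq_mul, expectation_eq]⟩
end
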